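/- For every m ≥ 1 and every m×m matrix (X_{i,j}) with entries in S₀, one has ‖(X_{i,j}) − (ψ_n(φ_n(X_{i,j})))‖ → 0 as n → ∞, where the norm is the operator norm of an m×m operator matrix acting on the direct sum of m copies of ℓ²(ℕ) (equivalently, the C*-norm on M_m(B(ℓ²(ℕ)))). -/

import Mathlib

noncomputable section

open scoped ComplexOrder InnerProductSpace

/-- The Hilbert space ℓ²(ℕ) of square-summable complex sequences. -/
abbrev Hs : Type := lp (fun _ : ℕ => ℂ) 2

/-- The standard orthonormal basis vectors of ℓ²(ℕ) (indexed from 0). -/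
def e (i : ℕ) : Hs := lp.single 2 i 1

/-- The matrix unit `E i j : x ↦ ⟨x, e j⟩ e i`. -/
def E (i j : ℕ) : Hs →L[ℂ] Hs := (innerSL ℂ (e j)).smulRight (e i)

/-- `K₀`: the norm-closed linear span of the matrix units `E i j`, `(i,j) ≠ (0,0)`. -/
def K0 : Submodule ℂ (Hs →L[ℂ] Hs) :=
  (Submodule.span ℂ {T | ∃ i j : ℕ, (i, j) ≠ (0, 0) ∧ T = E i j}).topologicalClosure

/-- The operator system `S₀` spanned by `K₀` and the identity operator. -/
def S0 : Submodule ℂ (Hs →L[ℂ] Hs) := Submodule.span ℂ {(1 : Hs →L[ℂ] Hs)} ⊔ K0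

lemma one_mem_S0 : (1 : Hs →L[ℂ] Hs) ∈ S0 :=
  Submodule.mem_sup_left (Submodule.mem_span_singleton_self _)

/-- The matrix entry `X_{ij} = ⟨X e_j, e_i⟩` of a bounded operator on ℓ²(ℕ). -/
def entry (X : Hs →L[ℂ] Hs) (i j : ℕ) : ℂ := ⟪e i, X (e j)⟫_ℂ

/-- `φ_{n+1}(X) = V_{n+1}* X V_{n+1}`, the upper-left (n+1)×(n+1) corner of `X`. -/
def phi (n : ℕ) (X : Hs →L[ℂ] Hs) : Matrix (Fin (n+1)) (Fin (n+1)) ℂ :=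
  fun i j => entry X i j

/-- `Q_{n+1}`: the projection onto the orthocomplement of the span of `e 0, …, e n`. -/
def Qop (n : ℕ) : Hs →L[ℂ] Hs := 1 - ∑ i : Fin (n+1), E i i

/-- `ψ_{n+1}(Y) = V_{n+1} Y V_{n+1}* + y₀₀ Q_{n+1}`. -/
def psi (n : ℕ) (Y : Matrix (Fin (n+1)) (Fin (n+1)) ℂ) : Hs →L[ℂ] Hs :=
  (∑ i : Fin (n+1), ∑ j : Fin (n+1), Y i j • E i j) + Y 0 0 • Qop n

/-- Positivity in the C*-algebra of m×m matrices over a star ring: `M = N* N`. -/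
def MatPos {A : Type*} [Ring A] [StarRing A] {m : ℕ}
    (M : Matrix (Fin m) (Fin m) A) : Prop :=
  ∃ N : Matrix (Fin m) (Fin m) A, M = N.conjTranspose * N

/-- Complete positivity of a map between star rings: every matrix amplification
preserves positivity. -/
def IsCPfun {A B : Type*} [Ring A] [StarRing A] [Ring B] [StarRing B]
    (θ : A → B) : Prop :=
  ∀ (m : ℕ) (M : Matrix (Fin m) (Fin m) A), MatPos M → MatPos (M.map θ)

/-- The operator on the Hilbert space direct sum of `m` copies of a Hilbert space induced by an
m×m matrix of bounded operators; its norm is the C*-norm on `M_m(B(H))`. -/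
def matOp {m : ℕ} {E' : Type*} [NormedAddCommGroup E'] [InnerProductSpace ℂ E']
    (M : Matrix (Fin m) (Fin m) (E' →L[ℂ] E')) :
    PiLp 2 (fun _ : Fin m => E') →L[ℂ] PiLp 2 (fun _ : Fin m => E') :=
  ((PiLp.continuousLinearEquiv 2 ℂ (fun _ : Fin m => E')).symm.toContinuousLinearMap).comp
    ((ContinuousLinearMap.pi (fun i => ∑ j, (M i j).comp (ContinuousLinearMap.proj j))).comp
      (PiLp.continuousLinearEquiv 2 ℂ (fun _ : Fin m => E')).toContinuousLinearMap)

/-!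
Write `P` for the projection onto the span of `e 0, …, e n`. Then
`ψ (φ X) = P X P + ⟨X e₀, e₀⟩ (1 - P)`, so the maps `ψ ∘ φ` are bounded uniformly in `n`, and the
operators `X` with `ψ (φ X) → X` form a closed subspace. It contains `1`, which every `ψ ∘ φ`
fixes, and each `E i j` with `(i, j) ≠ (0, 0)`, which `ψ ∘ φ` fixes as soon as `i, j ≤ n`; hence it
contains `S₀`. Convergence of operator matrices is entrywise because `‖(X i j)‖ ≤ ∑ ‖X i j‖`.
-/

open Filter Topology InnerProductSpace

section TendstoSubmodule

variable {ι 𝕜 V W : Type*} [NontriviallyNormedField 𝕜]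
  [SeminormedAddCommGroup V] [NormedSpace 𝕜 V] [SeminormedAddCommGroup W] [NormedSpace 𝕜 W]

/-- The subspace of vectors at which the operators `F i` converge to `T` along the filter `l`. -/
def tendstoSubmodule (F : ι → V →L[𝕜] W) (l : Filter ι) (T : V →L[𝕜] W) : Submodule 𝕜 V where
  carrier := {x | Tendsto (F · x) l (𝓝 (T x))}
  zero_mem' := by simp [tendsto_const_nhds]
  add_mem' hx hy := by simpa using hx.add hy
  smul_mem' c _ hx := by simpa using hx.const_smul c

lemma mem_tendstoSubmodule {F : ι → V →L[𝕜] W} {l : Filter ι} {T : V →L[𝕜] W} {x : V} :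
    x ∈ tendstoSubmodule F l T ↔ Tendsto (F · x) l (𝓝 (T x)) :=
  Iff.rfl

lemma isClosed_tendstoSubmodule {F : ι → V →L[𝕜] W} {C : ℝ} (hF : ∀ i, ‖F i‖ ≤ C)
    (l : Filter ι) (T : V →L[𝕜] W) : IsClosed (tendstoSubmodule F l T : Set V) := by
  have bounded_iff_equicontinuous :
      (∃ C, ∀ i, ‖F i‖ ≤ C) ↔ Equicontinuous ((↑) ∘ F : ι → V → W) :=
    (NormedSpace.equicontinuous_TFAE F).out 5 1
  have equicontinuous := bounded_iff_equicontinuous.1 ⟨C, hF⟩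
  exact equicontinuous.isClosed_setOfPred_tendsto T.continuous

end TendstoSubmodule

section CornerMap

variable {𝕜 A : Type*} [NontriviallyNormedField 𝕜] [NormedRing A] [NormedAlgebra 𝕜 A]

/-- Compression to the corner of `p`, extended by the scalar functional `f` on the complementary
corner: `x ↦ p x p + f(x) (1 - p)`. -/
def cornerMap (p : A) (f : A →L[𝕜] 𝕜) : A →L[𝕜] A :=
  ContinuousLinearMap.mulLeftRight 𝕜 A p p + f.smulRight (1 - p)

lemma cornerMap_apply (p : A) (f : A →L[𝕜] 𝕜) (x : A) :
    cornerMap p f x = p * x * p + f x • (1 - p) := by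
  simp [cornerMap]

lemma cornerMap_one {p : A} (hp : IsIdempotentElem p) {f : A →L[𝕜] 𝕜} (hf : f 1 = 1) :
    cornerMap p f 1 = 1 := by
  simp [cornerMap_apply, hp.eq, hf]

lemma norm_cornerMap_le [StarRing A] [CStarRing A] {p : A} (hp : IsStarProjection p)
    (f : A →L[𝕜] 𝕜) : ‖cornerMap p f‖ ≤ 1 + ‖f‖ := by
  have compression_le : ‖ContinuousLinearMap.mulLeftRight 𝕜 A p p‖ ≤ 1 :=
    (ContinuousLinearMap.opNorm_mulLeftRight_apply_apply_le 𝕜 A p p).trans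
      (mul_le_one₀ (hp.norm_le p) (norm_nonneg p) (hp.norm_le p))
  have scalar_le : ‖f.smulRight (1 - p)‖ ≤ ‖f‖ := by
    rw [ContinuousLinearMap.norm_smulRight_apply]
    exact mul_le_of_le_one_right (norm_nonneg f) (hp.one_sub.norm_le _)
  exact (norm_add_le _ _).trans (add_le_add compression_le scalar_le)

end CornerMap

section SumRankOne

variable {𝕜 H ι : Type*} [RCLike 𝕜] [NormedAddCommGroup H] [InnerProductSpace 𝕜 H] {v : ι → H}

lemma sum_rankOne_self_mul_mul_sum_rankOne_self (v : ι → H) (s : Finset ι) (T : H →L[𝕜] H) :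
    (∑ i ∈ s, rankOne 𝕜 (v i) (v i)) * T * ∑ i ∈ s, rankOne 𝕜 (v i) (v i) =
      ∑ i ∈ s, ∑ j ∈ s, inner 𝕜 (v i) (T (v j)) • rankOne 𝕜 (v i) (v j) := by
  simp only [Finset.sum_mul, Finset.mul_sum, ContinuousLinearMap.mul_def, comp_rankOne,
    ContinuousLinearMap.comp_apply, rankOne_apply, map_smul, smul_apply]
  exact Finset.sum_comm

lemma sum_rankOne_self_apply_of_mem (hv : Orthonormal 𝕜 v) {s : Finset ι} {i : ι} (hi : i ∈ s) :
    (∑ j ∈ s, rankOne 𝕜 (v j) (v j)) (v i) = v i := by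
  classical
  simp [orthonormal_iff_ite.1 hv, hi]

variable [CompleteSpace H]

lemma isStarProjection_sum_rankOne_self (hv : Orthonormal 𝕜 v) (s : Finset ι) :
    IsStarProjection (∑ i ∈ s, rankOne 𝕜 (v i) (v i)) where
  isIdempotentElem := by
    have orthogonal : OrthogonalIdempotents fun i => rankOne 𝕜 (v i) (v i) :=
      { idem := fun i => isIdempotentElem_rankOne_self (hv.1 i)
        ortho := fun i j hij => by
          simp [ContinuousLinearMap.mul_def, rankOne_comp_rankOne, hv.2 hij] }
    exact orthogonal.isIdempotentElem_sum
  isSelfAdjoint := isSelfAdjoint_sum s fun i _ =>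
    (isStarProjection_rankOne_self (hv.1 i)).isSelfAdjoint

lemma sum_rankOne_self_mul_rankOne_mul_of_mem (hv : Orthonormal 𝕜 v) {s : Finset ι} {i j : ι}
    (hi : i ∈ s) (hj : j ∈ s) :
    (∑ k ∈ s, rankOne 𝕜 (v k) (v k)) * rankOne 𝕜 (v i) (v j) * ∑ k ∈ s, rankOne 𝕜 (v k) (v k) =
      rankOne 𝕜 (v i) (v j) := by
  rw [ContinuousLinearMap.mul_def, ContinuousLinearMap.mul_def, comp_rankOne, rankOne_comp,
    (isStarProjection_sum_rankOne_self hv s).isSelfAdjoint.adjoint_eq,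
    sum_rankOne_self_apply_of_mem hv hi, sum_rankOne_self_apply_of_mem hv hj]

end SumRankOne

section MatOp

variable {m : ℕ} {H : Type*} [NormedAddCommGroup H] [InnerProductSpace ℂ H]

lemma norm_piLp_two_le_sum_norm {ι : Type*} [Fintype ι] {G : ι → Type*}
    [∀ i, SeminormedAddCommGroup (G i)] (x : PiLp 2 G) : ‖x‖ ≤ ∑ i, ‖x i‖ := by
  rw [PiLp.norm_eq_of_L2]
  exact Real.sqrt_le_iff.2 ⟨by positivity,
    Finset.sum_sq_le_sq_sum_of_nonneg fun i _ => norm_nonneg (x i)⟩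

lemma matOp_apply (M : Matrix (Fin m) (Fin m) (H →L[ℂ] H)) (x : PiLp 2 fun _ : Fin m => H)
    (i : Fin m) : matOp M x i = ∑ j, M i j (x j) := by
  simp [matOp]

lemma norm_matOp_le_sum (M : Matrix (Fin m) (Fin m) (H →L[ℂ] H)) :
    ‖matOp M‖ ≤ ∑ i, ∑ j, ‖M i j‖ := by
  refine ContinuousLinearMap.opNorm_le_bound _ (by positivity) fun x => ?_
  calc ‖matOp M x‖ ≤ ∑ i, ‖∑ j, M i j (x j)‖ := by
        simpa only [matOp_apply] using norm_piLp_two_le_sum_norm (matOp M x)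
    _ ≤ ∑ i, ∑ j, ‖M i j‖ * ‖x‖ := by
        gcongr with i
        refine norm_sum_le_of_le _ fun j _ => (M i j).le_opNorm_of_le ?_
        exact PiLp.norm_apply_le x j
    _ = (∑ i, ∑ j, ‖M i j‖) * ‖x‖ := by simp only [Finset.sum_mul]

end MatOp

lemma orthonormal_e : Orthonormal ℂ e := by
  refine orthonormal_iff_ite.2 fun i j => ?_
  simp [e, lp.inner_single_left, Pi.single_apply]

lemma E_eq_rankOne (i j : ℕ) : E i j = rankOne ℂ (e i) (e j) :=
  rfl

/-- The functional `X ↦ X_{ij}` on bounded operators, as a continuous linear map. -/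
def entryCLM (i j : ℕ) : (Hs →L[ℂ] Hs) →L[ℂ] ℂ :=
  (innerSL ℂ (e i)).comp (ContinuousLinearMap.apply ℂ Hs (e j))

lemma entryCLM_apply (i j : ℕ) (X : Hs →L[ℂ] Hs) : entryCLM i j X = entry X i j :=
  rfl

lemma entryCLM_self_one (i : ℕ) : entryCLM i i 1 = 1 := by
  simp [entryCLM_apply, entry, orthonormal_e.1 i]

lemma entryCLM_E_of_ne {i j k l : ℕ} (h : (i, j) ≠ (k, l)) : entryCLM k l (E i j) = 0 := by
  rw [entryCLM_apply, entry, E_eq_rankOne, inner_right_rankOne_apply, mul_eq_zero]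
  by_cases hi : i = k
  · exact Or.inr (orthonormal_e.2 fun hj => h (Prod.ext hi hj))
  · exact Or.inl (orthonormal_e.2 (Ne.symm hi))

/-- The orthogonal projection of `ℓ²(ℕ)` onto the span of `e 0, …, e n`. -/
def initialProj (n : ℕ) : Hs →L[ℂ] Hs := ∑ i ∈ Finset.range (n + 1), rankOne ℂ (e i) (e i)

lemma isStarProjection_initialProj (n : ℕ) : IsStarProjection (initialProj n) :=
  isStarProjection_sum_rankOne_self orthonormal_e _

lemma psi_phi_eq_cornerMap (n : ℕ) (X : Hs →L[ℂ] Hs) :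
    psi n (phi n X) = cornerMap (initialProj n) (entryCLM 0 0) X := by
  simp only [psi, phi, Qop, E_eq_rankOne, cornerMap_apply, initialProj,
    sum_rankOne_self_mul_mul_sum_rankOne_self, Finset.sum_range, entryCLM_apply, entry,
    Fin.val_zero]

lemma cornerMap_initialProj_E {n i j : ℕ} (hi : i ≤ n) (hj : j ≤ n) (h : (i, j) ≠ (0, 0)) :
    cornerMap (initialProj n) (entryCLM 0 0) (E i j) = E i j := by
  rw [cornerMap_apply, entryCLM_E_of_ne h, zero_smul, add_zero, E_eq_rankOne, initialProj]
  exact sum_rankOne_self_mul_rankOne_mul_of_mem orthonormal_e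
    (Finset.mem_range_succ_iff.2 hi) (Finset.mem_range_succ_iff.2 hj)

lemma S0_le_tendstoSubmodule_cornerMap :
    S0 ≤ tendstoSubmodule (fun n => cornerMap (initialProj n) (entryCLM 0 0)) atTop
      (ContinuousLinearMap.id ℂ (Hs →L[ℂ] Hs)) := by
  refine sup_le (Submodule.span_le.2 ?_)
    (Submodule.topologicalClosure_minimal _ (Submodule.span_le.2 ?_)
      (isClosed_tendstoSubmodule
        (fun n => norm_cornerMap_le (isStarProjection_initialProj n) _) _ _))
  · rintro _ rfl
    refine mem_tendstoSubmodule.2 (tendsto_const_nhds.congr fun n => ?_)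
    exact (cornerMap_one (isStarProjection_initialProj n).isIdempotentElem
      (entryCLM_self_one 0)).symm
  · rintro _ ⟨i, j, h, rfl⟩
    refine mem_tendstoSubmodule.2 (tendsto_const_nhds.congr' ?_)
    filter_upwards [eventually_ge_atTop i, eventually_ge_atTop j] with n hi hj
    exact (cornerMap_initialProj_E hi hj h).symm

lemma tendsto_psi_phi {X : Hs →L[ℂ] Hs} (hX : X ∈ S0) :
    Tendsto (fun n => psi n (phi n X)) atTop (𝓝 X) := by
  simpa only [psi_phi_eq_cornerMap] using! S0_le_tendstoSubmodule_cornerMap hX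

/-- for every `m ≥ 1` and every m×m matrix with entries in `S₀`, the matrix of
operators `(X_{i,j} − ψ_n(φ_n(X_{i,j})))` tends to `0` in the operator norm of an m×m operator
matrix acting on the direct sum of m copies of ℓ²(ℕ). -/
theorem stmt_2 (m : ℕ) (hm : 1 ≤ m) (X : Matrix (Fin m) (Fin m) (Hs →L[ℂ] Hs))
    (hX : ∀ i j, X i j ∈ S0) :
    Filter.Tendsto (fun n : ℕ => ‖matOp (X.map (fun x => x - psi n (phi n x)))‖)
      Filter.atTop (nhds 0) := by
  have entry_tendsto (i j) :
      Filter.Tendsto (fun n => ‖X i j - psi n (phi n (X i j))‖) Filter.atTop (nhds 0) := by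
    simpa using ((tendsto_psi_phi (hX i j)).const_sub (X i j)).norm
  have sum_tendsto :
      Filter.Tendsto (fun n => ∑ i, ∑ j, ‖X i j - psi n (phi n (X i j))‖)
        Filter.atTop (nhds 0) := by
    simpa using tendsto_finsetSum Finset.univ fun i _ =>
      tendsto_finsetSum Finset.univ fun j _ => entry_tendsto i j
  exact squeeze_zero (fun _ => norm_nonneg _) (fun _ => norm_matOp_le_sum _) sum_tendsto
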